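/- arXiv:2211.06063 — 5 statements merged into one kernel-verified Lean document; each statement's English description precedes it below -/
import Mathlib

section
/- Let h : [0,∞) → [0,∞) be a strictly increasing function with h(0) = 0 such that for every ε > 0 the integral ∫_{(0,ε)} h(x)^{-2} dx = ∞. Then there exists a strictly decreasing sequence (a_n)_{n≥0} of positive real numbers with a_0 = 1, lim_{n→∞} a_n = 0, and ∫_{a_n}^{a_{n-1}} h(x)^{-2} dx = n for every n ≥ 1. -/
open MeasureTheory Filter Topology

/-!
Since `h` is positive and increasing on `(0, ∞)`, the density `h⁻²` is decreasing there, hence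
integrable on every `[δ, b]` with `δ > 0`. So `x ↦ ∫_x^b h⁻²` is finite and continuous on `(0, b]`,
vanishes at `b`, and tends to `∞` at `0` by monotone convergence; the intermediate value theorem
lets it take any prescribed positive value at some `a ∈ (0, b)` (`exists_lintegral_Ioc_eq`).
Iterating from `a 0 = 1` produces the sequence. If it stayed above some `L > 0`, the integrals over
`(a (n + 1), a n]` would all be bounded by the finite integral over `(L, 1]`, whereas they
equal `n + 1`.
-/

lemma intervalIntegrable_inv_sq {h : ℝ → ℝ} (h_mono : StrictMonoOn h (Set.Ici 0))
    (h_zero : h 0 = 0) {δ b : ℝ} (hδ : 0 < δ) (hb : δ ≤ b) :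
    IntervalIntegrable (fun x => ((h x) ^ 2)⁻¹) volume δ b := by
  apply AntitoneOn.intervalIntegrable
  rw [Set.uIcc_of_le hb]
  intro x hx y hy hxy
  have hx0 : 0 < x := hδ.trans_le hx.1
  have hpos : 0 < h x := by
    have := h_mono (Set.mem_Ici.2 le_rfl) (Set.mem_Ici.2 hx0.le) hx0
    rwa [h_zero] at this
  have hle : h x ≤ h y :=
    h_mono.monotoneOn (Set.mem_Ici.2 hx0.le) (Set.mem_Ici.2 (hx0.le.trans hxy)) hxy
  show ((h y) ^ 2)⁻¹ ≤ ((h x) ^ 2)⁻¹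
  gcongr

lemma lintegral_Ioc_eq_ofReal {h : ℝ → ℝ} (h_mono : StrictMonoOn h (Set.Ici 0))
    (h_zero : h 0 = 0) {δ b : ℝ} (hδ : 0 < δ) (hb : δ ≤ b) :
    ∫⁻ x in Set.Ioc δ b, ENNReal.ofReal (((h x) ^ 2)⁻¹)
      = ENNReal.ofReal (∫ x in δ..b, ((h x) ^ 2)⁻¹) := by
  have hI := intervalIntegrable_inv_sq h_mono h_zero hδ hb
  rw [intervalIntegral.integral_of_le hb, ofReal_integral_eq_lintegral_ofReal]
  · exact (intervalIntegrable_iff_integrableOn_Ioc_of_le hb).1 hI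
  · exact Eventually.of_forall fun x => by positivity

/-- Monotone convergence: the integral over `(δ, b]` exceeds any finite bound once `δ` is small. -/
lemma exists_lt_lintegral_Ioc {f : ℝ → ENNReal} {b : ℝ} (hb : 0 < b)
    (h_int : ∫⁻ x in Set.Ioo 0 b, f x = ⊤) {c : ENNReal} (hc : c < ⊤) :
    ∃ δ, 0 < δ ∧ δ < b ∧ c < ∫⁻ x in Set.Ioc δ b, f x := by
  have hmono : Monotone fun n : ℕ => Set.Ioc (b / ((n : ℝ) + 2)) b := by
    intro m n hmn
    apply Set.Ioc_subset_Ioc_left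
    have : (m : ℝ) ≤ n := by exact_mod_cast hmn
    gcongr
  have hsub : Set.Ioo 0 b ⊆ ⋃ n : ℕ, Set.Ioc (b / ((n : ℝ) + 2)) b := by
    intro x hx
    obtain ⟨n, hn⟩ := exists_nat_gt (b / x)
    refine Set.mem_iUnion.2 ⟨n, ?_, hx.2.le⟩
    rw [div_lt_iff₀ hx.1] at hn
    rw [div_lt_iff₀ (by positivity)]
    nlinarith [hx.1]
  have htop : (volume.withDensity f) (⋃ n : ℕ, Set.Ioc (b / ((n : ℝ) + 2)) b) = ⊤ := by
    refine top_unique ?_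
    rw [← h_int, ← withDensity_apply f measurableSet_Ioo]
    exact measure_mono hsub
  rw [hmono.measure_iUnion] at htop
  obtain ⟨n, hn⟩ := lt_iSup_iff.1 (htop ▸ hc)
  rw [withDensity_apply f measurableSet_Ioc] at hn
  refine ⟨_, by positivity, div_lt_self hb ?_, hn⟩
  have : (0 : ℝ) ≤ n := n.cast_nonneg
  linarith

/-- The inductive step: below any `b > 0` there is a point `a` cutting off a prescribed mass. -/
lemma exists_lintegral_Ioc_eq {h : ℝ → ℝ} (h_mono : StrictMonoOn h (Set.Ici 0))
    (h_zero : h 0 = 0)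
    (h_int : ∀ ε > (0 : ℝ),
      ∫⁻ x in Set.Ioo 0 ε, ENNReal.ofReal (((h x) ^ 2)⁻¹) = ⊤)
    {b : ℝ} (hb : 0 < b) (n : ℕ) :
    ∃ a, 0 < a ∧ a < b ∧
      ∫⁻ x in Set.Ioc a b, ENNReal.ofReal (((h x) ^ 2)⁻¹) = (n + 1 : ℕ) := by
  obtain ⟨δ, hδ, hδb, hlt⟩ :=
    exists_lt_lintegral_Ioc hb (h_int b hb) (ENNReal.natCast_lt_top (n + 1))
  have hI := intervalIntegrable_inv_sq h_mono h_zero hδ hδb.le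
  have hcont : ContinuousOn (fun x => ∫ t in x..b, ((h t) ^ 2)⁻¹) (Set.Icc δ b) := by
    rw [← Set.uIcc_of_le hδb.le]
    apply intervalIntegral.continuousOn_primitive_interval_left
    rw [Set.uIcc_of_le hδb.le]
    exact (intervalIntegrable_iff_integrableOn_Icc_of_le hδb.le).1 hI
  rw [lintegral_Ioc_eq_ofReal h_mono h_zero hδ hδb.le, ← ENNReal.ofReal_natCast,
    ENNReal.ofReal_lt_ofReal_iff_of_nonneg (Nat.cast_nonneg _)] at hlt
  obtain ⟨a, ⟨hδa, hab⟩, ha⟩ := intermediate_value_Icc' hδb.le hcont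
    (show ((n + 1 : ℕ) : ℝ) ∈ _ from ⟨by simp; positivity, hlt.le⟩)
  have ha : ∫ t in a..b, ((h t) ^ 2)⁻¹ = ((n + 1 : ℕ) : ℝ) := ha
  refine ⟨a, hδ.trans_le hδa, lt_of_le_of_ne hab ?_, ?_⟩
  · rintro rfl
    rw [intervalIntegral.integral_same] at ha
    exact (Nat.cast_ne_zero.2 n.succ_ne_zero) ha.symm
  · rw [lintegral_Ioc_eq_ofReal h_mono h_zero (hδ.trans_le hδa) hab, ha, ENNReal.ofReal_natCast]

/-- existence of the Yamada–Watanabe sequence `(a_n)` for a strictly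
increasing `h : [0,∞) → [0,∞)` with `h 0 = 0` whose inverse square is non-integrable
at the origin. -/
theorem stmt_0 (h : ℝ → ℝ)
    (h_nonneg : ∀ x, 0 ≤ x → 0 ≤ h x)
    (h_mono : StrictMonoOn h (Set.Ici 0))
    (h_zero : h 0 = 0)
    (h_int : ∀ ε > (0 : ℝ),
      ∫⁻ x in Set.Ioo 0 ε, ENNReal.ofReal (((h x) ^ 2)⁻¹) = ⊤) :
    ∃ a : ℕ → ℝ, a 0 = 1 ∧ StrictAnti a ∧ (∀ n, 0 < a n) ∧
      Tendsto a atTop (𝓝 0) ∧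
      ∀ n : ℕ, ∫⁻ x in Set.Ioc (a (n + 1)) (a n),
        ENNReal.ofReal (((h x) ^ 2)⁻¹) = (n + 1 : ℕ) := by
  choose g hg0 hgb hg using
    fun (b : {b : ℝ // 0 < b}) (n : ℕ) => exists_lintegral_Ioc_eq h_mono h_zero h_int b.2 n
  let s : ℕ → {b : ℝ // 0 < b} :=
    fun n => Nat.rec ⟨1, one_pos⟩ (fun n b => ⟨g b n, hg0 b n⟩) n
  have hanti : StrictAnti fun n : ℕ => (s n).1 := by
    apply strictAnti_nat_of_succ_lt
    exact fun n => hgb (s n) n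
  refine ⟨fun n => (s n).1, rfl, hanti, fun n => (s n).2, ?_, fun n => hg (s n) n⟩
  have hbdd : BddBelow (Set.range fun n : ℕ => (s n).1) :=
    ⟨0, by rintro _ ⟨n, rfl⟩; exact (s n).2.le⟩
  have hlim := tendsto_atTop_ciInf hanti.antitone hbdd
  set L := ⨅ n, (s n).1
  have hL : 0 ≤ L := le_ciInf fun n => (s n).2.le
  rcases hL.eq_or_lt with hL0 | hLpos
  · rwa [← hL0] at hlim
  exfalso
  have hfin : ∫⁻ x in Set.Ioc L 1, ENNReal.ofReal (((h x) ^ 2)⁻¹) ≠ ⊤ := by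
    rw [lintegral_Ioc_eq_ofReal h_mono h_zero hLpos (show L ≤ 1 from ciInf_le hbdd 0)]
    exact ENNReal.ofReal_ne_top
  obtain ⟨n, hn⟩ := ENNReal.exists_nat_gt hfin
  have hle : ((n + 1 : ℕ) : ENNReal) ≤ ∫⁻ x in Set.Ioc L 1, ENNReal.ofReal (((h x) ^ 2)⁻¹) := by
    rw [← hg (s n) n]
    exact lintegral_mono_set
      (Set.Ioc_subset_Ioc (ciInf_le hbdd (n + 1)) (hanti.antitone (Nat.zero_le n)))
  have : ((n + 1 : ℕ) : ENNReal) < n := hle.trans_lt hn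
  exact absurd (Nat.cast_lt.1 this) (by omega)
end

section
/- Let δ₁ > 0, β₁ > 0, σ > 0, a ∈ ℝ and t' > 0. Define u : [0,t'] × ℝ → ℝ by u(t,x) = δ₁²/β₁² + δ₁σ²a²/(2β₁²) + e^{−β₁(t'−t)}·((σ²a² + 2δ₁)/β₁)·(x − δ₁/β₁) + e^{−2β₁(t'−t)}·[ (x − δ₁/β₁)² + (σ²a²/(2β₁))·(δ₁/β₁ − 2x) ]. Then u(t', x) = x² for all x ∈ ℝ, the second space derivative is ∂²_x u(t,x) = 2e^{−2β₁(t'−t)} > 0, and u satisfies the linear parabolic PDE ∂_t u(t,x) + (δ₁ − β₁ x)·∂_x u(t,x) + (σ²a²/2)·x·∂²_x u(t,x) = 0 for all (t,x) ∈ [0,t'] × ℝ. -/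
/-!
The function `u` is quadratic in `x` with coefficients that are exponentials in `t`, so its
derivatives are computed explicitly (`hux`, `huxx`, `hut` below). In the PDE the coefficients of
`e^{-β₁(t'-t)}` and of `e^{-2β₁(t'-t)}` cancel separately, by rational identities in `x` and the
parameters.
-/

open MeasureTheory Filter Topology

/-- the explicit function `u` solves the linear parabolic PDE
`∂_t u + (δ₁ - β₁ x) ∂_x u + (σ²a²/2) x ∂²_x u = 0` with terminal value `x²`,
and `∂²_x u = 2 e^{-2β₁(t'-t)} > 0`. -/
theorem stmt_10 (δ₁ β₁ σ a t' : ℝ)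
    (hδ : 0 < δ₁) (hβ : 0 < β₁) (hσ : 0 < σ) (ht' : 0 < t')
    (u : ℝ → ℝ → ℝ)
    (hu : ∀ t x, u t x =
      δ₁ ^ 2 / β₁ ^ 2 + δ₁ * σ ^ 2 * a ^ 2 / (2 * β₁ ^ 2)
      + Real.exp (-β₁ * (t' - t)) * ((σ ^ 2 * a ^ 2 + 2 * δ₁) / β₁) * (x - δ₁ / β₁)
      + Real.exp (-2 * β₁ * (t' - t)) *
          ((x - δ₁ / β₁) ^ 2 + (σ ^ 2 * a ^ 2 / (2 * β₁)) * (δ₁ / β₁ - 2 * x))) :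
    (∀ x, u t' x = x ^ 2) ∧
    (∀ t x, deriv (deriv (u t)) x = 2 * Real.exp (-2 * β₁ * (t' - t)) ∧
      0 < deriv (deriv (u t)) x) ∧
    (∀ t ∈ Set.Icc (0 : ℝ) t', ∀ x : ℝ,
      deriv (fun s => u s x) t + (δ₁ - β₁ * x) * deriv (u t) x
        + (σ ^ 2 * a ^ 2 / 2) * x * deriv (deriv (u t)) x = 0) := by
  have hux : ∀ t, deriv (u t) = fun x =>
      Real.exp (-β₁ * (t' - t)) * ((σ ^ 2 * a ^ 2 + 2 * δ₁) / β₁)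
      + Real.exp (-2 * β₁ * (t' - t)) *
          (2 * (x - δ₁ / β₁) - σ ^ 2 * a ^ 2 / β₁) := by
    intro t
    funext x
    have hy : HasDerivAt (fun x : ℝ => x - δ₁ / β₁) 1 x := (hasDerivAt_id x).sub_const _
    have hz : HasDerivAt (fun x : ℝ => δ₁ / β₁ - 2 * x) (-(2 * 1)) x :=
      ((hasDerivAt_id x).const_mul 2).const_sub _
    rw [show u t = _ from funext (hu t)]
    refine HasDerivAt.deriv (HasDerivAt.congr_deriv
      (((hy.const_mul _).const_add _).add
        (((hy.pow 2).add (hz.const_mul _)).const_mul _)) ?_)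
    ring
  have huxx : ∀ t x, deriv (deriv (u t)) x = 2 * Real.exp (-2 * β₁ * (t' - t)) := by
    intro t x
    have hy : HasDerivAt (fun x : ℝ => x - δ₁ / β₁) 1 x := (hasDerivAt_id x).sub_const _
    rw [hux t]
    refine HasDerivAt.deriv (HasDerivAt.congr_deriv
      ((((hy.const_mul 2).sub_const _).const_mul _).const_add _) ?_)
    ring
  have hut : ∀ t x, deriv (fun s => u s x) t =
      β₁ * Real.exp (-β₁ * (t' - t)) * ((σ ^ 2 * a ^ 2 + 2 * δ₁) / β₁) * (x - δ₁ / β₁)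
      + 2 * β₁ * Real.exp (-2 * β₁ * (t' - t)) *
          ((x - δ₁ / β₁) ^ 2 + (σ ^ 2 * a ^ 2 / (2 * β₁)) * (δ₁ / β₁ - 2 * x)) := by
    intro t x
    have he : ∀ c : ℝ, HasDerivAt (fun s => Real.exp (c * (t' - s)))
        (Real.exp (c * (t' - t)) * (c * (-1))) t := fun c =>
      (((hasDerivAt_id t).const_sub t').const_mul c).exp
    rw [show (fun s => u s x) = _ from funext fun s => hu s x]
    refine HasDerivAt.deriv (HasDerivAt.congr_deriv
      (((((he (-β₁)).mul_const _).mul_const _).const_add _).add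
        ((he (-2 * β₁)).mul_const _)) ?_)
    ring
  refine ⟨fun x => ?_, fun t x => ⟨huxx t x, ?_⟩, fun t _ x => ?_⟩
  · rw [hu]
    simp only [sub_self, mul_zero, Real.exp_zero]
    field_simp
    ring
  · rw [huxx]
    positivity
  · rw [hut, huxx, hux]
    -- The coefficients of the two exponentials vanish separately, so both may be
    -- treated as independent atoms.
    generalize Real.exp (-β₁ * (t' - t)) = E
    generalize Real.exp (-2 * β₁ * (t' - t)) = F
    field_simp
    ring
end

section
/- Let δ₁ > 0, β₁ > 0, σ > 0, t' > 0 and 0 ≤ σ̲² < σ̄², and let G(b) := (1/2)(σ̄²·b⁺ − σ̲²·b⁻) where b⁺ = max(b,0) and b⁻ = max(−b,0). Define u : [0,t'] × ℝ → ℝ by u(t,x) = δ₁²/β₁² + δ₁σ²σ̄²/(2β₁²) + e^{−β₁(t'−t)}·((σ²σ̄² + 2δ₁)/β₁)·(x − δ₁/β₁) + e^{−2β₁(t'−t)}·[ (x − δ₁/β₁)² + (σ²σ̄²/(2β₁))·(δ₁/β₁ − 2x) ]. Then for all t ∈ [0,t'] and all x ≥ 0, u satisfies the fully nonlinear PDE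 ∂_t u(t,x) + (δ₁ − β₁ x)·∂_x u(t,x) + 2·G( (σ² x / 2)·∂²_x u(t,x) ) = 0, with terminal condition u(t', x) = x². -/
/-!
On `x ≥ 0` the argument of `G` is nonnegative, because `∂²ₓu = 2 e^{-2β₁(t'-t)} > 0`, so `G` acts
there as the linear map `b ↦ σ̄² b / 2`. The equation becomes linear, and the coefficients of
`e^{-β₁(t'-t)}` and `e^{-2β₁(t'-t)}` on its left-hand side vanish separately.
-/

open MeasureTheory Filter Topology

/-- with `a² = σ̄²` (here `sb`), the explicit function `u` solves the
fully nonlinear PDE `∂_t u + (δ₁ - β₁ x) ∂_x u + 2 G((σ²x/2) ∂²_x u) = 0` on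
`[0,t'] × [0,∞)` with terminal value `x²`, where `G(b) = (σ̄² b⁺ - σ̲² b⁻)/2`. -/
theorem stmt_11 (δ₁ β₁ σ t' sl sb : ℝ)
    (hδ : 0 < δ₁) (hβ : 0 < β₁) (hσ : 0 < σ) (ht' : 0 < t')
    (hsl : 0 ≤ sl) (hslb : sl < sb)
    (G : ℝ → ℝ)
    (hG : ∀ b : ℝ, G b = (1 / 2) * (sb * max b 0 - sl * max (-b) 0))
    (u : ℝ → ℝ → ℝ)
    (hu : ∀ t x, u t x =
      δ₁ ^ 2 / β₁ ^ 2 + δ₁ * σ ^ 2 * sb / (2 * β₁ ^ 2)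
      + Real.exp (-β₁ * (t' - t)) * ((σ ^ 2 * sb + 2 * δ₁) / β₁) * (x - δ₁ / β₁)
      + Real.exp (-2 * β₁ * (t' - t)) *
          ((x - δ₁ / β₁) ^ 2 + (σ ^ 2 * sb / (2 * β₁)) * (δ₁ / β₁ - 2 * x))) :
    (∀ x, u t' x = x ^ 2) ∧
    (∀ t ∈ Set.Icc (0 : ℝ) t', ∀ x : ℝ, 0 ≤ x →
      deriv (fun s => u s x) t + (δ₁ - β₁ * x) * deriv (u t) x
        + 2 * G ((σ ^ 2 * x / 2) * deriv (deriv (u t)) x) = 0) := by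
  have hx1 : ∀ t x, HasDerivAt (u t)
      (Real.exp (-β₁ * (t' - t)) * ((σ ^ 2 * sb + 2 * δ₁) / β₁)
        + Real.exp (-2 * β₁ * (t' - t)) * (2 * (x - δ₁ / β₁) - σ ^ 2 * sb / β₁)) x := by
    intro t x
    rw [show u t = _ from funext (hu t)]
    have h := hasDerivAt_id' x
    have h1 := (h.sub_const (δ₁ / β₁)).const_mul
      (Real.exp (-β₁ * (t' - t)) * ((σ ^ 2 * sb + 2 * δ₁) / β₁))
    have h2 := (((h.sub_const (δ₁ / β₁)).fun_pow 2).fun_add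
      (((h.const_mul 2).const_sub (δ₁ / β₁)).const_mul (σ ^ 2 * sb / (2 * β₁)))).const_mul
      (Real.exp (-2 * β₁ * (t' - t)))
    refine ((h1.const_add _).fun_add h2).congr_deriv ?_
    norm_num only [Nat.cast_ofNat, pow_one]
    field_simp
    ring
  have hx2 : ∀ t x, HasDerivAt (deriv (u t)) (2 * Real.exp (-2 * β₁ * (t' - t))) x := by
    intro t x
    rw [show deriv (u t) = _ from funext fun y => (hx1 t y).deriv]
    refine ((((((hasDerivAt_id' x).sub_const (δ₁ / β₁)).const_mul 2).sub_const
      _).const_mul _).const_add _).congr_deriv ?_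
    ring
  have hexp : ∀ c t : ℝ, HasDerivAt (fun s => Real.exp (c * (t' - s)))
      (-c * Real.exp (c * (t' - t))) t := by
    intro c t
    refine ((((hasDerivAt_id' t).const_sub t').const_mul c).exp).congr_deriv ?_
    ring
  have ht : ∀ t x, HasDerivAt (fun s => u s x)
      (β₁ * Real.exp (-β₁ * (t' - t)) * ((σ ^ 2 * sb + 2 * δ₁) / β₁) * (x - δ₁ / β₁)
        + 2 * β₁ * Real.exp (-2 * β₁ * (t' - t)) *
          ((x - δ₁ / β₁) ^ 2 + (σ ^ 2 * sb / (2 * β₁)) * (δ₁ / β₁ - 2 * x))) t := by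
    intro t x
    rw [show (fun s => u s x) = _ from funext fun s => hu s x]
    refine ((((((hexp (-β₁) t).mul_const _).mul_const _).const_add _).fun_add
      ((hexp (-2 * β₁) t).mul_const _))).congr_deriv ?_
    ring
  refine ⟨fun x => ?_, fun t _ x hx => ?_⟩
  · rw [hu]
    simp only [sub_self, mul_zero, Real.exp_zero]
    field_simp
    ring
  · have hnonneg : 0 ≤ σ ^ 2 * x / 2 * (2 * Real.exp (-2 * β₁ * (t' - t))) := by positivity
    rw [(ht t x).deriv, (hx2 t x).deriv, (hx1 t x).deriv, hG, max_eq_left hnonneg,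
      max_eq_right (neg_nonpos.mpr hnonneg)]
    -- The exponentials are independent unknowns in the remaining polynomial identity.
    generalize Real.exp (-β₁ * (t' - t)) = E₁
    generalize Real.exp (-2 * β₁ * (t' - t)) = E₂
    field_simp
    ring
end

section
/- Let δ₂ > 0, β₂ > 0, t' > 0 and 0 ≤ σ̲² < σ̄². Define u : [0,t'] × [0,∞) → ℝ by u(t,x) = (x − δ₂/β₂)·e^{σ̄² β₂ (t − t')} + δ₂/β₂ for 0 ≤ x ≤ δ₂/β₂ and u(t,x) = (x − δ₂/β₂)·e^{σ̲² β₂ (t − t')} + δ₂/β₂ for x ≥ δ₂/β₂. Fix t ∈ (0, t') and set x₀ = δ₂/β₂. Then there exist NO (p, q, X) ∈ ℝ³ such that u(t+h, x₀+y) ≤ u(t, x₀) + p·h + q·y + (1/2)·X·y² + o(|h| + y²) as (h,y) → (0,0) (with t+h ∈ [0,t'] and x₀+y ≥ 0); that is, the parabolic superjet P^{2,+}u(t, x₀) is empty. -/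
/-!
At the kink `x₀ = δ₂ / β₂` the spatial slope of `u t` is `a = exp (sb β₂ (t - t'))` on the left and
`b = exp (sl β₂ (t - t'))` on the right, and `a < b` because `t < t'` and `sl < sb`: the kink is
strictly convex, so no parabola touches from above. Quantitatively, restrict a putative superjet
bound to the points `(0, y)` and `(0, -y)` with `y > 0` small, where the error is less than `y ^ 2`;
adding the two inequalities eliminates `q` and gives `b - a < (2 + X) y`, which fails as `y → 0`.
-/

open MeasureTheory Filter Topology

/-- the parabolic superjet of the piecewise function `u` at the kink
point `(t, δ₂/β₂)` (with `t` interior) is empty: no `(p,q,X)` satisfies the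
one-sided second order Taylor upper bound. -/
theorem stmt_15 (δ₂ β₂ t' sl sb : ℝ)
    (hδ : 0 < δ₂) (hβ : 0 < β₂) (ht' : 0 < t')
    (hsl : 0 ≤ sl) (hslb : sl < sb)
    (u : ℝ → ℝ → ℝ)
    (hu1 : ∀ t x, 0 ≤ x → x ≤ δ₂ / β₂ →
      u t x = (x - δ₂ / β₂) * Real.exp (sb * β₂ * (t - t')) + δ₂ / β₂)
    (hu2 : ∀ t x, δ₂ / β₂ ≤ x →
      u t x = (x - δ₂ / β₂) * Real.exp (sl * β₂ * (t - t')) + δ₂ / β₂)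
    (t : ℝ) (ht : t ∈ Set.Ioo (0 : ℝ) t') :
    ¬ ∃ p q X : ℝ,
      Tendsto
        (fun hy : ℝ × ℝ =>
          max (u (t + hy.1) (δ₂ / β₂ + hy.2)
            - (u t (δ₂ / β₂) + p * hy.1 + q * hy.2 + X * hy.2 ^ 2 / 2)) 0
            / (|hy.1| + hy.2 ^ 2))
        (𝓝[{hy : ℝ × ℝ | hy ≠ (0, 0) ∧ t + hy.1 ∈ Set.Icc (0 : ℝ) t' ∧
            0 ≤ δ₂ / β₂ + hy.2}] (0, 0))
        (𝓝 0) := by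
  rintro ⟨p, q, X, hlim⟩
  obtain ⟨ht0, ht1⟩ := ht
  have hx0 : 0 < δ₂ / β₂ := div_pos hδ hβ
  have hab : Real.exp (sb * β₂ * (t - t')) < Real.exp (sl * β₂ * (t - t')) := by
    apply Real.exp_lt_exp.mpr
    have := mul_pos (mul_pos (sub_pos.mpr hslb) hβ) (sub_pos.mpr ht1)
    nlinarith
  set a := Real.exp (sb * β₂ * (t - t')) with ha
  set b := Real.exp (sl * β₂ * (t - t')) with hb
  have hsmall : ∀ᶠ y : ℝ in 𝓝[>] 0, y < δ₂ / β₂ :=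
    (eventually_lt_nhds hx0).filter_mono nhdsWithin_le_nhds
  have hpos : ∀ᶠ y : ℝ in 𝓝[>] 0, 0 < y := eventually_mem_nhdsWithin
  -- The vertical segments `(0, c * y)`, with `c = ±1`, stay in the punctured domain.
  have hpath : ∀ c : ℝ, |c| = 1 → Tendsto (fun y : ℝ => ((0 : ℝ), c * y)) (𝓝[>] 0)
      (𝓝[{hy : ℝ × ℝ | hy ≠ (0, 0) ∧ t + hy.1 ∈ Set.Icc (0 : ℝ) t' ∧
            0 ≤ δ₂ / β₂ + hy.2}] (0, 0)) := by
    intro c hc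
    apply tendsto_nhdsWithin_iff.mpr
    constructor
    · have hcont : Continuous (fun y : ℝ => ((0 : ℝ), c * y)) := by fun_prop
      have h0 := hcont.tendsto 0
      simp only [mul_zero] at h0
      exact h0.mono_left nhdsWithin_le_nhds
    · filter_upwards [hsmall, hpos] with y hy hy0
      have hc0 : c ≠ 0 := by
        rintro rfl
        simp at hc
      have hcy : |c * y| = y := by rw [abs_mul, hc, one_mul, abs_of_pos hy0]
      have := neg_abs_le (c * y)
      refine ⟨?_, ⟨by linarith, by linarith⟩, by linarith⟩
      intro h
      exact mul_ne_zero hc0 hy0.ne' (Prod.ext_iff.mp h).2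
  have hR := (hlim.comp (hpath 1 (by simp))).eventually (eventually_lt_nhds one_pos)
  have hL := (hlim.comp (hpath (-1) (by simp))).eventually (eventually_lt_nhds one_pos)
  have hkey : ∀ᶠ y : ℝ in 𝓝[>] 0, b - a ≤ (2 + X) * y := by
    filter_upwards [hR, hL, hsmall, hpos] with y hyR hyL hy hy0
    have hy2 : 0 < y ^ 2 := by positivity
    have hu0 : u t (δ₂ / β₂) = δ₂ / β₂ := by rw [hu2 t _ le_rfl]; ring
    have huR : u t (δ₂ / β₂ + y) = y * b + δ₂ / β₂ := by
      rw [hu2 t _ (by linarith)]; ring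
    have huL : u t (δ₂ / β₂ + -y) = -y * a + δ₂ / β₂ := by
      rw [hu1 t _ (by linarith) (by linarith)]; ring
    simp only [Function.comp, one_mul, neg_mul, add_zero, mul_zero, abs_zero, zero_add,
      neg_sq, hu0, huR, huL] at hyR hyL
    rw [div_lt_one hy2] at hyR hyL
    have h1 := (le_max_left _ _).trans_lt hyR
    have h2 := (le_max_left _ _).trans_lt hyL
    refine le_of_mul_le_mul_right ?_ hy0
    nlinarith
  have hzero : Tendsto (fun y : ℝ => (2 + X) * y) (𝓝[>] 0) (𝓝 0) := by
    have hcont : Continuous (fun y : ℝ => (2 + X) * y) := by fun_prop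
    have h0 := hcont.tendsto 0
    simp only [mul_zero] at h0
    exact h0.mono_left nhdsWithin_le_nhds
  have := ge_of_tendsto hzero hkey
  linarith
end

section
/- Let δ₂ > 0, β₂ > 0, t' > 0 and 0 ≤ σ̲² < σ̄². Define u : [0,t'] × [0,∞) → ℝ by u(t,x) = (x − δ₂/β₂)·e^{σ̄² β₂ (t − t')} + δ₂/β₂ for 0 ≤ x ≤ δ₂/β₂ and u(t,x) = (x − δ₂/β₂)·e^{σ̲² β₂ (t − t')} + δ₂/β₂ for x ≥ δ₂/β₂. Fix t ∈ (0, t') and set x₀ = δ₂/β₂. If (p, q, X) ∈ ℝ³ satisfies u(t+h, x₀+y) ≥ u(t, x₀) + p·h + q·y + (1/2)·X·y² + o(|h| + y²) as (h,y) → (0,0) (with t+h ∈ [0,t'] and x₀+y ≥ 0), i.e. (p,q,X) lies in the parabolic subjet P^{2,−}u(t, x₀), then p ≤ 0 and e^{σ̄² β₂ (t − t')} ≤ q ≤ e^{σ̲² β₂ (t − t')}. -/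
open MeasureTheory Filter Topology

/-!
The subjet inequality is tested along the coordinate axes. In the time direction `u` is constant
on the line `x = δ₂ / β₂`, so a positive `p` would make the quotient equal to `p` for every `h > 0`.
In the space direction `u t` is affine on each side of the kink; a slope `q` outside the
interval of one-sided slopes leaves an error linear in `y`, which cannot be `o(y ^ 2)`
(`exists_small_linear_dominates`).
-/

/-- A positive linear term dominates the quadratic `(1 - X / 2) z ^ 2` for some arbitrarily
small `z > 0`. -/
lemma exists_small_linear_dominates {a c : ℝ} (ha : 0 < a) (hc : 0 < c) (X : ℝ) :
    ∃ z, 0 < z ∧ z < c ∧ z ^ 2 ≤ a * z + X * z ^ 2 / 2 := by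
  have hX : 0 < 1 + |X| := by positivity
  refine ⟨min (c / 2) (a / (1 + |X|)), by positivity,
    (min_le_left _ _).trans_lt (by linarith), ?_⟩
  have hz : 0 < min (c / 2) (a / (1 + |X|)) := by positivity
  have hza := min_le_right (c / 2) (a / (1 + |X|))
  set z := min (c / 2) (a / (1 + |X|))
  rw [le_div_iff₀ hX] at hza
  nlinarith [mul_le_mul_of_nonneg_right hza hz.le, neg_abs_le X, sq_nonneg z,
    mul_nonneg (abs_nonneg X) (sq_nonneg z),
    mul_nonneg (by linarith [neg_abs_le X] : 0 ≤ X + |X|) (sq_nonneg z)]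

/-- any element `(p,q,X)` of the parabolic subjet of the piecewise
function `u` at the kink point `(t, δ₂/β₂)` satisfies `p ≤ 0` and
`e^{σ̄²β₂(t-t')} ≤ q ≤ e^{σ̲²β₂(t-t')}`. -/
theorem stmt_16 (δ₂ β₂ t' sl sb : ℝ)
    (hδ : 0 < δ₂) (hβ : 0 < β₂) (ht' : 0 < t')
    (hsl : 0 ≤ sl) (hslb : sl < sb)
    (u : ℝ → ℝ → ℝ)
    (hu1 : ∀ t x, 0 ≤ x → x ≤ δ₂ / β₂ →
      u t x = (x - δ₂ / β₂) * Real.exp (sb * β₂ * (t - t')) + δ₂ / β₂)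
    (hu2 : ∀ t x, δ₂ / β₂ ≤ x →
      u t x = (x - δ₂ / β₂) * Real.exp (sl * β₂ * (t - t')) + δ₂ / β₂)
    (t : ℝ) (ht : t ∈ Set.Ioo (0 : ℝ) t')
    (p q X : ℝ)
    (hsub : Tendsto
      (fun hy : ℝ × ℝ =>
        max (u t (δ₂ / β₂) + p * hy.1 + q * hy.2 + X * hy.2 ^ 2 / 2
          - u (t + hy.1) (δ₂ / β₂ + hy.2)) 0
          / (|hy.1| + hy.2 ^ 2))
      (𝓝[{hy : ℝ × ℝ | hy ≠ (0, 0) ∧ t + hy.1 ∈ Set.Icc (0 : ℝ) t' ∧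
          0 ≤ δ₂ / β₂ + hy.2}] (0, 0))
      (𝓝 0)) :
    p ≤ 0 ∧ Real.exp (sb * β₂ * (t - t')) ≤ q ∧
      q ≤ Real.exp (sl * β₂ * (t - t')) := by
  obtain ⟨ht0, ht1⟩ := ht
  have hx : 0 < δ₂ / β₂ := by positivity
  set x₀ := δ₂ / β₂
  have hu0 : ∀ s, u s x₀ = x₀ := fun s => by rw [hu2 s x₀ le_rfl]; ring
  have key : ∀ ε > 0, ∃ r > 0, ∀ h y : ℝ, |h| < r → |y| < r → (h, y) ≠ ((0 : ℝ), (0 : ℝ)) →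
      t + h ∈ Set.Icc (0 : ℝ) t' → 0 ≤ x₀ + y →
      x₀ + p * h + q * y + X * y ^ 2 / 2 - u (t + h) (x₀ + y) < ε * (|h| + y ^ 2) := by
    intro ε hε
    obtain ⟨r, hr, H⟩ := Metric.tendsto_nhdsWithin_nhds.1 hsub ε hε
    refine ⟨r, hr, fun h y hh hy hne hth hxy => ?_⟩
    have hd : dist (h, y) ((0 : ℝ), (0 : ℝ)) < r := by
      rw [Prod.dist_eq]
      simpa using ⟨hh, hy⟩
    have hlt := (le_abs_self _).trans_lt
      (by simpa only [Real.dist_eq, sub_zero] using H ⟨hne, hth, hxy⟩ hd)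
    have hpos : 0 < |h| + y ^ 2 := by
      by_cases h0 : h = 0
      · have hy0 : y ≠ 0 := fun hy0 => hne (by rw [h0, hy0])
        positivity
      · positivity
    rw [div_lt_iff₀ hpos, hu0] at hlt
    exact (le_max_left _ _).trans_lt hlt
  refine ⟨?_, ?_, ?_⟩
  · by_contra! hp
    obtain ⟨r, hr, H⟩ := key p hp
    obtain ⟨h, h0, hh⟩ := exists_between (lt_min hr (sub_pos.2 ht1))
    have h1 := hh.trans_le (min_le_left _ _)
    have h2 := hh.trans_le (min_le_right _ _)
    have := H h 0 (by rwa [abs_of_pos h0]) (by simpa using hr) (by simp [h0.ne'])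
      ⟨by linarith, by linarith⟩ (by linarith)
    rw [add_zero, hu0, abs_of_pos h0] at this
    nlinarith
  · by_contra! hq
    obtain ⟨r, hr, H⟩ := key 1 one_pos
    obtain ⟨z, z0, hz, hzX⟩ := exists_small_linear_dominates (sub_pos.2 hq) (lt_min hr hx) X
    have h1 := hz.trans_le (min_le_left _ _)
    have h2 := hz.trans_le (min_le_right _ _)
    have := H 0 (-z) (by simpa using hr) (by rwa [abs_neg, abs_of_pos z0]) (by simp [z0.ne'])
      ⟨by linarith, by linarith⟩ (by linarith)
    rw [hu1 _ _ (by linarith) (by linarith), add_zero, abs_zero] at this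
    linarith
  · by_contra! hq
    obtain ⟨r, hr, H⟩ := key 1 one_pos
    obtain ⟨z, z0, hz, hzX⟩ := exists_small_linear_dominates (sub_pos.2 hq) hr X
    have := H 0 z (by simpa using hr) (by rwa [abs_of_pos z0]) (by simp [z0.ne'])
      ⟨by linarith, by linarith⟩ (by linarith)
    rw [hu2 _ _ (by linarith), add_zero, abs_zero] at this
    linarith
end
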